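/- For every integer n ≥ 1, the triple (G_n, X, Y) (with X, Y the images of the generators in the Fermat group G_n) encodes a reflexive regular map: X and Y generate G_n, (X*Y)² = 1, and there is a group automorphism of G_n sending X to X⁻¹ and Y to Y⁻¹; moreover this map is simple, its graph has exactly 3n vertices each of degree 2n, and its density equals 2/3. -/

import Mathlib

namespace RegularMap

variable {G : Type*} [Group G]

/-- The vertex set of the map: left cosets of the cyclic subgroup generated by `y`. -/
abbrev Vertex (y : G) : Type _ := G ⧸ Subgroup.zpowers y

/-- The rotation about the vertex `v = g⟨y⟩`, namely `g * y * g⁻¹`. -/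
def rot (y : G) (v : Vertex y) : G :=
  Quotient.liftOn' v (fun g => g * y * g⁻¹) (by
    intro a b h
    obtain ⟨k, hk⟩ := QuotientGroup.leftRel_apply.mp h
    have hk' : y ^ k = a⁻¹ * b := hk
    have hb : b = a * y ^ k := by rw [hk']; group
    subst hb
    group)

/-- Two vertices are adjacent iff they are distinct and form the endpoint pair of
some edge `g⟨x*y⟩`, whose endpoints are `g⟨y⟩` and `g*x*y⟨y⟩`. -/
def Adj (x y : G) (v w : Vertex y) : Prop :=
  v ≠ w ∧ ∃ g : G,
    ({v, w} : Set (Vertex y)) = {QuotientGroup.mk g, QuotientGroup.mk (g * x * y)}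

/-- The map is simple: no edge has equal endpoints, and distinct edges (left cosets
of `⟨x*y⟩`) have distinct endpoint pairs. -/
def IsSimple (x y : G) : Prop :=
  (∀ g : G, (QuotientGroup.mk g : Vertex y) ≠ QuotientGroup.mk (g * x * y)) ∧
  ∀ g h : G,
    ({QuotientGroup.mk g, QuotientGroup.mk (g * x * y)} : Set (Vertex y)) =
      {QuotientGroup.mk h, QuotientGroup.mk (h * x * y)} →
    (QuotientGroup.mk g : G ⧸ Subgroup.zpowers (x * y)) = QuotientGroup.mk h

/-- The map is reflexive: some group automorphism inverts both `x` and `y`. -/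
def IsReflexive (x y : G) : Prop :=
  ∃ σ : G ≃* G, σ x = x⁻¹ ∧ σ y = y⁻¹

/-- An automorphism of the map (given a reflection σ): either orientation preserving,
`g⟨y⟩ ↦ a*g⟨y⟩`, or orientation reversing, `g⟨y⟩ ↦ a*σ(g)⟨y⟩`. -/
def IsMapAut (y : G) (σ : G ≃* G) (φ : Vertex y → Vertex y) : Prop :=
  (∃ a : G, ∀ g : G, φ (QuotientGroup.mk g) = QuotientGroup.mk (a * g)) ∨
  (∃ a : G, ∀ g : G, φ (QuotientGroup.mk g) = QuotientGroup.mk (a * σ g))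

/-- `v'` is a diagonal neighbour of `v`: `v' = S_w² • v` for some vertex `w` adjacent to `v`. -/
def DiagNeighbor (x y : G) (v v' : Vertex y) : Prop :=
  ∃ w : Vertex y, Adj x y v w ∧ v' = rot y w ^ 2 • v

/-- Diagonal alignment: the reflexive-transitive closure of the diagonal-neighbour relation. -/
def Aligned (x y : G) : Vertex y → Vertex y → Prop :=
  Relation.ReflTransGen (DiagNeighbor x y)

/-- The primitive period `J`: the least `j ≥ 1` such that `S_v^j` fixes every vertex
diagonally aligned with `v` (this is independent of `v`). -/
noncomputable def primPeriod (x y : G) : ℕ :=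
  sInf {j : ℕ | 1 ≤ j ∧ ∀ v v' : Vertex y, Aligned x y v v' → rot y v ^ j • v' = v'}

/-- The even period `T = lcm(J, 2)`. -/
noncomputable def evenPeriod (x y : G) : ℕ := Nat.lcm (primPeriod x y) 2

/-- Relators of the tetrahedral group ⟨X,Y ∣ X³, Y³, (XY)²⟩. -/
def tetRels : Set (FreeGroup (Fin 2)) :=
  {FreeGroup.of 0 ^ 3, FreeGroup.of 1 ^ 3, (FreeGroup.of 0 * FreeGroup.of 1) ^ 2}

/-- Relators of the Fermat group ⟨X,Y ∣ X³, Y^(2n), (XY)², [X,Y]³⟩. -/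
def fermatRels (n : ℕ) : Set (FreeGroup (Fin 2)) :=
  {FreeGroup.of 0 ^ 3, FreeGroup.of 1 ^ (2 * n), (FreeGroup.of 0 * FreeGroup.of 1) ^ 2,
    (FreeGroup.of 0 * FreeGroup.of 1 * (FreeGroup.of 0)⁻¹ * (FreeGroup.of 1)⁻¹) ^ 3}

/-- `(G,x,y)` is the tetrahedral map: the canonical homomorphism from the presented
group ⟨X,Y ∣ X³, Y³, (XY)²⟩ sending X to x and Y to y is an isomorphism. -/
def IsTet (G : Type*) [Group G] (x y : G) : Prop :=
  ∃ e : PresentedGroup tetRels ≃* G,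
    e (PresentedGroup.of 0) = x ∧ e (PresentedGroup.of 1) = y

/-- `(G,x,y)` is the Fermat map `Fer(n)`: the canonical homomorphism from the Fermat
group `G_n` sending X to x and Y to y is an isomorphism. -/
def IsFermat (n : ℕ) (G : Type*) [Group G] (x y : G) : Prop :=
  ∃ e : PresentedGroup (fermatRels n) ≃* G,
    e (PresentedGroup.of 0) = x ∧ e (PresentedGroup.of 1) = y


/-! ### Helpers: the concrete action on `Fin 3 × ZMod n` -/

/-- Translation homomorphism. -/
def trans (n : ℕ) : Multiplicative (Fin 3 → ZMod n) →* Equiv.Perm (Fin 3 × ZMod n) where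
  toFun d :=
    { toFun := fun v => (v.1, v.2 + d.toAdd v.1)
      invFun := fun v => (v.1, v.2 - d.toAdd v.1)
      left_inv := fun v => by simp
      right_inv := fun v => by simp }
  map_one' := by ext v <;> simp
  map_mul' a b := by
    ext v
    · simp
    · simp
      ring

lemma trans_zpow (n : ℕ) (d : Fin 3 → ZMod n) (i : ℤ) (v : Fin 3 × ZMod n) :
    (trans n (Multiplicative.ofAdd d) ^ i) v = (v.1, v.2 + i * d v.1) := by
  rw [← map_zpow, ← ofAdd_zsmul]
  simp [trans]

def pX (n : ℕ) : Equiv.Perm (Fin 3 × ZMod n) where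
  toFun v := (v.1 + 1, v.2)
  invFun v := (v.1 - 1, v.2)
  left_inv v := by simp
  right_inv v := by simp

def pY (n : ℕ) : Equiv.Perm (Fin 3 × ZMod n) where
  toFun v := (- v.1, ![-v.2, -v.2, 1 - v.2] v.1)
  invFun v := (- v.1, ![-v.2, 1 - v.2, - v.2] v.1)
  left_inv := by
    rintro ⟨p, t⟩
    fin_cases p <;> simp [show -(1 : Fin 3) = 2 from rfl, show -(2 : Fin 3) = 1 from rfl]
  right_inv := by
    rintro ⟨p, t⟩
    fin_cases p <;> simp [show -(1 : Fin 3) = 2 from rfl, show -(2 : Fin 3) = 1 from rfl]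

section
variable (n : ℕ) (t : ZMod n)
lemma pX0 : pX n (0, t) = (1, t) := rfl
lemma pX1 : pX n (1, t) = (2, t) := rfl
lemma pX2 : pX n (2, t) = (0, t) := rfl
lemma pXi0 : (pX n)⁻¹ (0, t) = (2, t) := rfl
lemma pXi1 : (pX n)⁻¹ (1, t) = (0, t) := rfl
lemma pXi2 : (pX n)⁻¹ (2, t) = (1, t) := rfl
lemma pY0 : pY n (0, t) = (0, -t) := by exact congrArg (fun p : Fin 3 => (p, -t)) (show -(0 : Fin 3) = 0 from rfl)
lemma pY1 : pY n (1, t) = (2, -t) := rfl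
lemma pY2 : pY n (2, t) = (1, 1 - t) := rfl
lemma pYi0 : (pY n)⁻¹ (0, t) = (0, -t) := by exact congrArg (fun p : Fin 3 => (p, -t)) (show -(0 : Fin 3) = 0 from rfl)
lemma pYi1 : (pY n)⁻¹ (1, t) = (2, 1 - t) := rfl
lemma pYi2 : (pY n)⁻¹ (2, t) = (1, - t) := rfl
end

lemma perm_ext3 {n : ℕ} {f g : Equiv.Perm (Fin 3 × ZMod n)}
    (h0 : ∀ t, f (0, t) = g (0, t)) (h1 : ∀ t, f (1, t) = g (1, t))
    (h2 : ∀ t, f (2, t) = g (2, t)) : f = g := by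
  refine Equiv.ext ?_
  rintro ⟨p, t⟩
  fin_cases p
  · exact h0 t
  · exact h1 t
  · exact h2 t

lemma pY_sq (n : ℕ) : pY n ^ 2 = trans n (Multiplicative.ofAdd ![0, 1, -1]) := by
  apply perm_ext3 <;> intro t <;>
    simp [pow_succ, Equiv.Perm.mul_apply, pY0, pY1, pY2, trans] <;> ring

lemma pB (n : ℕ) : pX n * pY n ^ 2 * (pX n)⁻¹ =
    trans n (Multiplicative.ofAdd ![-1, 0, 1]) := by
  rw [pY_sq]
  apply perm_ext3 <;> intro t <;>
    simp [Equiv.Perm.mul_apply, pXi0, pXi1, pXi2, pX0, pX1, pX2, trans]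

lemma pY_sq_zpow (n : ℕ) (i : ℤ) (v : Fin 3 × ZMod n) :
    ((pY n ^ 2) ^ i) v = (v.1, v.2 + i * ![0, 1, -1] v.1) := by
  rw [pY_sq, trans_zpow]

lemma pB_zpow (n : ℕ) (i : ℤ) (v : Fin 3 × ZMod n) :
    ((pX n * pY n ^ 2 * (pX n)⁻¹) ^ i) v = (v.1, v.2 + i * ![-1, 0, 1] v.1) := by
  rw [pB, trans_zpow]

lemma pX_cube (n : ℕ) : pX n ^ 3 = 1 := by
  apply perm_ext3 <;> intro t <;> simp [pow_succ, Equiv.Perm.mul_apply, pX0, pX1, pX2]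

lemma pXY_sq (n : ℕ) : (pX n * pY n) ^ 2 = 1 := by
  apply perm_ext3 <;> intro t <;>
    simp [pow_succ, Equiv.Perm.mul_apply, pX0, pX1, pX2, pY0, pY1, pY2]

lemma pComm (n : ℕ) : (pX n * pY n * (pX n)⁻¹ * (pY n)⁻¹) ^ 3 = 1 := by
  apply perm_ext3 <;> intro t <;>
    simp [pow_succ, Equiv.Perm.mul_apply, pX0, pX1, pX2, pY0, pY1, pY2,
      pXi0, pXi1, pXi2, pYi0, pYi1, pYi2]

lemma pY_pow (n : ℕ) : pY n ^ (2 * n) = 1 := by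
  rw [pow_mul]
  refine Equiv.ext fun v => ?_
  have := pY_sq_zpow n n v
  rw [zpow_natCast] at this
  rw [this]; simp

lemma pY_fix (n : ℕ) (m : ℤ) : (pY n ^ m) (0, 0) = (0, 0) := by
  have : pY n ∈ MulAction.stabilizer (Equiv.Perm (Fin 3 × ZMod n)) ((0, 0) : Fin 3 × ZMod n) := by
    rw [MulAction.mem_stabilizer_iff, Equiv.Perm.smul_def, pY0, neg_zero]
  exact (Subgroup.zpow_mem _ this m)

/-- A power of `pY` fixing `(2,0)` is a power with exponent divisible by `2n`. -/
lemma pY_fix2 (n : ℕ) (m : ℤ) (h : (pY n ^ m) (2, 0) = (2, 0)) : ((2 * n : ℕ) : ℤ) ∣ m := by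
  obtain ⟨l, rfl | rfl⟩ := Int.even_or_odd' m
  · rw [zpow_mul, show (pY n ^ (2 : ℤ)) = pY n ^ 2 from zpow_natCast _ 2, pY_sq_zpow] at h
    simp only [Prod.mk.injEq] at h
    have h2 := h.2
    simp [ZMod.intCast_zmod_eq_zero_iff_dvd] at h2
    push_cast
    exact mul_dvd_mul_left 2 h2
  · exfalso
    rw [zpow_add, zpow_one, Equiv.Perm.mul_apply, pY2, zpow_mul,
      show (pY n ^ (2 : ℤ)) = pY n ^ 2 from zpow_natCast _ 2, pY_sq_zpow] at h
    simp at h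

/-! ### Normal forms in an abstract group -/

section
variable {H : Type*} [Group H] {X Y : H}

lemma yxy (h2 : (X * Y) ^ 2 = 1) : Y * X * Y = X⁻¹ := by
  apply eq_inv_of_mul_eq_one_right
  rw [← h2, pow_two]; simp only [mul_assoc]

lemma xyx (h2 : (X * Y) ^ 2 = 1) : X * Y * X = Y⁻¹ := by
  apply eq_inv_of_mul_eq_one_left
  rw [← h2, pow_two]; simp only [mul_assoc]

lemma xixi (h1 : X ^ 3 = 1) : X⁻¹ * X⁻¹ = X := by
  have : X * X * X = 1 := by rw [← h1]; simp only [pow_succ, pow_zero, one_mul]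
  rw [← mul_inv_rev, inv_eq_iff_mul_eq_one, this]

lemma xx (h1 : X ^ 3 = 1) : X * X = X⁻¹ := by
  have : X * X * X = 1 := by rw [← h1]; simp only [pow_succ, pow_zero, one_mul]
  exact eq_inv_of_mul_eq_one_left this

lemma relBCA (h1 : X ^ 3 = 1) (h2 : (X * Y) ^ 2 = 1) :
    (X * Y ^ 2 * X⁻¹) * (X⁻¹ * Y ^ 2 * X) * Y ^ 2 = 1 := by
  calc (X * Y ^ 2 * X⁻¹) * (X⁻¹ * Y ^ 2 * X) * Y ^ 2
      = X * Y * Y * (X⁻¹ * X⁻¹) * Y * (Y * X * Y) * Y := by simp only [pow_two, mul_assoc]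
    _ = X * Y * (Y * X * Y) * (Y * X * Y) * Y := by rw [xixi h1]; simp only [mul_assoc]
    _ = X * Y * (X⁻¹ * X⁻¹) * Y := by rw [yxy h2]; simp only [mul_assoc]
    _ = (X * Y) ^ 2 := by rw [xixi h1, pow_two]; simp only [mul_assoc]
    _ = 1 := h2

lemma relACB (h1 : X ^ 3 = 1) (h2 : (X * Y) ^ 2 = 1)
    (h3 : (X * Y * X⁻¹ * Y⁻¹) ^ 3 = 1) :
    Y ^ 2 * (X⁻¹ * Y ^ 2 * X) * (X * Y ^ 2 * X⁻¹) = 1 := by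
  have hc : X * Y * X⁻¹ * Y⁻¹ = Y⁻¹ * X * Y⁻¹ := by
    calc X * Y * X⁻¹ * Y⁻¹ = (X * Y * X) * (X⁻¹ * X⁻¹) * Y⁻¹ := by group
      _ = _ := by rw [xyx h2, xixi h1]
  rw [hc] at h3
  have e : Y ^ 2 * (X⁻¹ * Y ^ 2 * X) * (X * Y ^ 2 * X⁻¹)
      = Y ^ 2 * X⁻¹ * Y ^ 2 * (X * X) * Y ^ 2 * X⁻¹ := by simp only [mul_assoc]
  rw [e, xx h1]
  have e2 : Y ^ 2 * X⁻¹ * Y ^ 2 * X⁻¹ * Y ^ 2 * X⁻¹ = Y * ((Y⁻¹ * X * Y⁻¹) ^ 3)⁻¹ * Y⁻¹ := by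
    simp only [pow_succ, pow_zero, one_mul, mul_inv_rev, inv_inv, mul_assoc, mul_inv_cancel,
      mul_one]
  rw [e2, h3]; group

lemma semi_XA : SemiconjBy X (Y ^ 2) (X * Y ^ 2 * X⁻¹) := by
  unfold SemiconjBy; group

lemma mid_eq {a b c : H} (h : a * c * b = 1) : c = a⁻¹ * b⁻¹ :=
  eq_mul_inv_of_mul_eq (eq_inv_of_mul_eq_one_right (by rw [← mul_assoc]; exact h))

lemma c_eq (h1 : X ^ 3 = 1) (h2 : (X * Y) ^ 2 = 1)
    (h3 : (X * Y * X⁻¹ * Y⁻¹) ^ 3 = 1) :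
    X⁻¹ * Y ^ 2 * X = (Y ^ 2)⁻¹ * (X * Y ^ 2 * X⁻¹)⁻¹ := by
  exact mid_eq (relACB h1 h2 h3)

lemma comm_AB (h1 : X ^ 3 = 1) (h2 : (X * Y) ^ 2 = 1)
    (h3 : (X * Y * X⁻¹ * Y⁻¹) ^ 3 = 1) : Commute (Y ^ 2) (X * Y ^ 2 * X⁻¹) := by
  have a := relBCA h1 h2
  rw [c_eq h1 h2 h3] at a
  have b : (Y ^ 2)⁻¹ * (X * Y ^ 2 * X⁻¹)⁻¹ = (X * Y ^ 2 * X⁻¹)⁻¹ * (Y ^ 2)⁻¹ := mid_eq a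
  have c : Commute (Y ^ 2)⁻¹ (X * Y ^ 2 * X⁻¹)⁻¹ := b
  exact Commute.inv_inv_iff.mp c

lemma semi_XB (h1 : X ^ 3 = 1) (h2 : (X * Y) ^ 2 = 1)
    (h3 : (X * Y * X⁻¹ * Y⁻¹) ^ 3 = 1) :
    SemiconjBy X (X * Y ^ 2 * X⁻¹) ((Y ^ 2)⁻¹ * (X * Y ^ 2 * X⁻¹)⁻¹) := by
  rw [← c_eq h1 h2 h3]
  unfold SemiconjBy
  calc X * (X * Y ^ 2 * X⁻¹) = (X * X) * Y ^ 2 * X⁻¹ := by simp only [mul_assoc]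
    _ = X⁻¹ * Y ^ 2 * (X * X) := by rw [xx h1]
    _ = _ := by simp only [mul_assoc]

lemma semi_YB (h1 : X ^ 3 = 1) (h2 : (X * Y) ^ 2 = 1)
    (h3 : (X * Y * X⁻¹ * Y⁻¹) ^ 3 = 1) :
    SemiconjBy Y (X * Y ^ 2 * X⁻¹) ((Y ^ 2)⁻¹ * (X * Y ^ 2 * X⁻¹)⁻¹) := by
  rw [← c_eq h1 h2 h3]
  unfold SemiconjBy
  calc Y * (X * Y ^ 2 * X⁻¹) = (Y * X * Y) * Y * X⁻¹ := by simp only [mul_assoc, pow_two]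
    _ = X⁻¹ * Y * (Y * X * Y) := by rw [yxy h2]
    _ = _ := by simp only [mul_assoc, pow_two]

/-- Normal form predicate. -/
def NF (X Y g : H) : Prop :=
  ∃ i j e : ℤ, ∃ u : H, (u = 1 ∨ u = X ∨ u = X⁻¹) ∧
    g = (Y ^ 2) ^ i * (X * Y ^ 2 * X⁻¹) ^ j * u * Y ^ e

lemma c_zpow (h1 : X ^ 3 = 1) (h2 : (X * Y) ^ 2 = 1)
    (h3 : (X * Y * X⁻¹ * Y⁻¹) ^ 3 = 1) (j : ℤ) :
    ((Y ^ 2)⁻¹ * (X * Y ^ 2 * X⁻¹)⁻¹) ^ j = (Y ^ 2) ^ (-j) * (X * Y ^ 2 * X⁻¹) ^ (-j) := by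
  rw [((comm_AB h1 h2 h3).inv_inv).mul_zpow, inv_zpow', inv_zpow']

lemma NF_X (h1 : X ^ 3 = 1) (h2 : (X * Y) ^ 2 = 1)
    (h3 : (X * Y * X⁻¹ * Y⁻¹) ^ 3 = 1) {g : H} (hg : NF X Y g) : NF X Y (X * g) := by
  obtain ⟨i, j, e, u, hu, rfl⟩ := hg
  have sA := (semi_XA (X := X) (Y := Y)).zpow_right i
  have sB := (semi_XB h1 h2 h3).zpow_right j
  have cAB := comm_AB h1 h2 h3
  rw [c_zpow h1 h2 h3] at sB
  refine ⟨-j, i - j, e, X * u, ?_, ?_⟩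
  · rcases hu with rfl | rfl | rfl
    · simp
    · rw [xx h1]; simp
    · simp
  · generalize X * Y ^ 2 * X⁻¹ = B at *
    generalize Y ^ 2 = A at *
    calc X * (A ^ i * B ^ j * u * Y ^ e) = (X * A ^ i) * B ^ j * u * Y ^ e := by
          simp only [mul_assoc]
      _ = B ^ i * (X * B ^ j) * u * Y ^ e := by rw [sA.eq]; simp only [mul_assoc]
      _ = (B ^ i * A ^ (-j)) * B ^ (-j) * X * u * Y ^ e := by rw [sB.eq]; simp only [mul_assoc]
      _ = A ^ (-j) * (B ^ i * B ^ (-j)) * X * u * Y ^ e := by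
          rw [(cAB.symm.zpow_zpow i (-j)).eq]; simp only [mul_assoc]
      _ = _ := by rw [← zpow_add, ← sub_eq_add_neg]; simp only [mul_assoc]

lemma NF_Y (h1 : X ^ 3 = 1) (h2 : (X * Y) ^ 2 = 1)
    (h3 : (X * Y * X⁻¹ * Y⁻¹) ^ 3 = 1) {g : H} (hg : NF X Y g) : NF X Y (Y * g) := by
  obtain ⟨i, j, e, u, hu, rfl⟩ := hg
  have sA : SemiconjBy Y (Y ^ 2) (Y ^ 2) := (Commute.refl Y).pow_right 2
  replace sA := sA.zpow_right i
  have sB := (semi_YB h1 h2 h3).zpow_right j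
  have cAB := comm_AB h1 h2 h3
  rw [c_zpow h1 h2 h3] at sB
  have key : Y * ((Y ^ 2) ^ i * (X * Y ^ 2 * X⁻¹) ^ j * u * Y ^ e) =
      (Y ^ 2) ^ (i - j) * (X * Y ^ 2 * X⁻¹) ^ (-j) * (Y * u) * Y ^ e := by
    generalize X * Y ^ 2 * X⁻¹ = B at *
    generalize Y ^ 2 = A at *
    calc Y * (A ^ i * B ^ j * u * Y ^ e) = (Y * A ^ i) * B ^ j * u * Y ^ e := by
          simp only [mul_assoc]
      _ = A ^ i * (Y * B ^ j) * u * Y ^ e := by rw [sA.eq]; simp only [mul_assoc]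
      _ = (A ^ i * A ^ (-j)) * B ^ (-j) * Y * u * Y ^ e := by rw [sB.eq]; simp only [mul_assoc]
      _ = _ := by rw [← zpow_add, ← sub_eq_add_neg]; simp only [mul_assoc]
  rw [key]
  rcases hu with rfl | rfl | rfl
  · exact ⟨i - j, -j, 1 + e, 1, by simp, by rw [zpow_add, zpow_one]; simp only [mul_assoc, one_mul]⟩
  · refine ⟨i - j, -j, -1 + e, u⁻¹, by simp, ?_⟩
    rw [zpow_add, zpow_neg_one, ← yxy h2]; simp only [mul_assoc, mul_inv_cancel_left]
  · refine ⟨i - j + 1, -j, 1 + e, X, by simp, ?_⟩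
    have : Y * X⁻¹ = Y ^ 2 * X * Y := by rw [← yxy h2, pow_two]; simp only [mul_assoc]
    rw [this, zpow_add (Y ^ 2), zpow_add Y, zpow_one, zpow_one,
      mul_assoc ((Y ^ 2) ^ (i - j)) (Y ^ 2), (cAB.zpow_right (-j)).eq]
    simp only [mul_assoc]

lemma NF_all {n : ℕ} (hn : 1 ≤ n) (h1 : X ^ 3 = 1) (h2 : (X * Y) ^ 2 = 1)
    (h3 : (X * Y * X⁻¹ * Y⁻¹) ^ 3 = 1) (h4 : Y ^ (2 * n) = 1)
    (htop : Subgroup.closure {X, Y} = ⊤) (g : H) : NF X Y g := by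
  let M : Submonoid H :=
    { carrier := {g | ∀ s, NF X Y s → NF X Y (g * s)}
      one_mem' := fun s hs => by simpa using hs
      mul_mem' := fun {a b} ha hb s hs => by rw [mul_assoc]; exact ha _ (hb _ hs) }
  have hX : X ∈ M := fun s hs => NF_X h1 h2 h3 hs
  have hY : Y ∈ M := fun s hs => NF_Y h1 h2 h3 hs
  have hXi : X⁻¹ ∈ M := by rw [← xx h1]; exact M.mul_mem hX hX
  have hYi : Y⁻¹ ∈ M := by
    have : Y⁻¹ = Y ^ (2 * n - 1) := by
      symm; apply eq_inv_of_mul_eq_one_left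
      rw [← pow_succ, ← h4]; congr 1; omega
    rw [this]; exact M.pow_mem hY _
  have hM : g ∈ M ∧ g⁻¹ ∈ M := by
    have hg : g ∈ Subgroup.closure {X, Y} := by rw [htop]; trivial
    induction hg using Subgroup.closure_induction with
    | mem x hx =>
      rcases hx with rfl | hx
      · exact ⟨hX, hXi⟩
      · rw [Set.mem_singleton_iff] at hx; subst hx; exact ⟨hY, hYi⟩
    | one => simp [M.one_mem]
    | mul x y _ _ hx hy => exact ⟨M.mul_mem hx.1 hy.1, by rw [mul_inv_rev]; exact M.mul_mem hy.2 hx.2⟩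
    | inv x _ hx => exact ⟨hx.2, by rw [inv_inv]; exact hx.1⟩
  have := hM.1 1 ⟨0, 0, 0, 1, by simp, by simp⟩
  simpa using this

/-! ### The main facts from an action -/

lemma stab_mem {n : ℕ} (hn : 1 ≤ n) (h1 : X ^ 3 = 1) (h2 : (X * Y) ^ 2 = 1)
    (h3 : (X * Y * X⁻¹ * Y⁻¹) ^ 3 = 1) (h4 : Y ^ (2 * n) = 1)
    (htop : Subgroup.closure {X, Y} = ⊤)
    (ρ : H →* Equiv.Perm (Fin 3 × ZMod n)) (hρX : ρ X = pX n) (hρY : ρ Y = pY n)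
    (g : H) (hg : ρ g (0, 0) = (0, 0)) : g ∈ Subgroup.zpowers Y := by
  obtain ⟨i, j, e, u, hu, rfl⟩ := NF_all hn h1 h2 h3 h4 htop g
  simp only [map_mul, map_zpow, map_pow, map_inv, hρX, hρY, Equiv.Perm.mul_apply, pY_fix] at hg
  have hB := pB_zpow n j
  have hA := pY_sq_zpow n i
  rcases hu with rfl | rfl | rfl
  · rw [map_one, Equiv.Perm.one_apply, hB, hA] at hg
    simp only [Prod.mk.injEq] at hg
    have h2 := hg.2
    simp [ZMod.intCast_zmod_eq_zero_iff_dvd] at h2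
    obtain ⟨k, rfl⟩ := h2
    have hB1 : (X * Y ^ 2 * X⁻¹) ^ ((n : ℤ) * k) = 1 := by
      rw [zpow_mul, zpow_natCast, conj_pow, ← pow_mul, h4]; simp
    rw [hB1, mul_one, mul_one]
    exact mul_mem (zpow_mem (pow_mem (Subgroup.mem_zpowers Y) _) _)
      (zpow_mem (Subgroup.mem_zpowers Y) _)
  · rw [hρX, pX0, hB, hA] at hg
    simp at hg
  · rw [map_inv, hρX, pXi0, hB, hA] at hg
    simp at hg

lemma zpowers_fix {n : ℕ}
    (ρ : H →* Equiv.Perm (Fin 3 × ZMod n)) (hρY : ρ Y = pY n)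
    (g : H) (hg : g ∈ Subgroup.zpowers Y) : ρ g (0, 0) = (0, 0) := by
  obtain ⟨m, rfl⟩ := hg
  simp only [map_zpow, hρY, pY_fix]

lemma order_Y {n : ℕ} (h4 : Y ^ (2 * n) = 1)
    (ρ : H →* Equiv.Perm (Fin 3 × ZMod n)) (hρY : ρ Y = pY n) : orderOf Y = 2 * n := by
  apply Nat.dvd_antisymm (orderOf_dvd_of_pow_eq_one h4)
  have h : ((2 * n : ℕ) : ℤ) ∣ (orderOf Y : ℤ) := by
    apply pY_fix2
    rw [zpow_natCast, ← hρY, ← map_pow, pow_orderOf_eq_one]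
    simp
  exact_mod_cast h

lemma core_free {n : ℕ} (h4 : Y ^ (2 * n) = 1)
    (ρ : H →* Equiv.Perm (Fin 3 × ZMod n)) (hρX : ρ X = pX n) (hρY : ρ Y = pY n)
    (g : H) (hg : g ∈ Subgroup.zpowers Y)
    (hg2 : (X * Y)⁻¹ * g * (X * Y) ∈ Subgroup.zpowers Y) : g = 1 := by
  have h := zpowers_fix ρ hρY _ hg2
  obtain ⟨m, rfl⟩ := hg
  have h5 : (pY n ^ m) (1, 0) = (1, 0) := by
    have h7 := congrArg (ρ (X * Y)) h
    rw [← Equiv.Perm.mul_apply, ← map_mul, mul_assoc (X * Y)⁻¹, mul_inv_cancel_left] at h7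
    simpa [hρX, hρY, pY0, pX0, Equiv.Perm.mul_apply] using h7
  have h6 : (pY n ^ m) (2, 0) = (2, 0) := by
    have e : ((2, 0) : Fin 3 × ZMod n) = pY n (1, 0) := by rw [pY1, neg_zero]
    rw [e, ← Equiv.Perm.mul_apply, ((Commute.refl (pY n)).zpow_left m).eq,
      Equiv.Perm.mul_apply, h5]
  obtain ⟨k, rfl⟩ := pY_fix2 n m h6
  show Y ^ (((2 * n : ℕ) : ℤ) * k) = 1
  rw [zpow_mul, zpow_natCast, h4, one_zpow]

lemma not_mem {n : ℕ}
    (ρ : H →* Equiv.Perm (Fin 3 × ZMod n)) (hρX : ρ X = pX n) (hρY : ρ Y = pY n) :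
    X * Y ∉ Subgroup.zpowers Y := by
  intro h
  have h := zpowers_fix ρ hρY _ h
  simp [hρX, hρY, pY0, pX0] at h

lemma card_vertex {n : ℕ} (hn : 1 ≤ n) (h1 : X ^ 3 = 1) (h2 : (X * Y) ^ 2 = 1)
    (h3 : (X * Y * X⁻¹ * Y⁻¹) ^ 3 = 1) (h4 : Y ^ (2 * n) = 1)
    (htop : Subgroup.closure {X, Y} = ⊤)
    (ρ : H →* Equiv.Perm (Fin 3 × ZMod n)) (hρX : ρ X = pX n) (hρY : ρ Y = pY n) :
    Nat.card (Vertex Y) = 3 * n := by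
  let f : Vertex Y → Fin 3 × ZMod n := fun v =>
    Quotient.liftOn' v (fun g => ρ g (0, 0)) (by
      intro a b h
      have h := zpowers_fix ρ hρY _ (QuotientGroup.leftRel_apply.mp h)
      have hb : b = a * (a⁻¹ * b) := by group
      show ρ a (0, 0) = ρ b (0, 0)
      rw [hb, map_mul, Equiv.Perm.mul_apply, h])
  have hf : ∀ g : H, f (QuotientGroup.mk g) = ρ g (0, 0) := fun g => rfl
  have hbij : Function.Bijective f := by
    constructor
    · intro v w
      induction v using QuotientGroup.induction_on with | _ a =>
      induction w using QuotientGroup.induction_on with | _ b =>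
      intro h
      rw [hf, hf] at h
      rw [QuotientGroup.eq]
      apply stab_mem hn h1 h2 h3 h4 htop ρ hρX hρY
      rw [map_mul, Equiv.Perm.mul_apply, ← h, map_inv]
      exact Equiv.symm_apply_apply _ _
    · rintro ⟨p, t⟩
      obtain ⟨k, rfl⟩ := ZMod.intCast_surjective t
      have hA := fun i => pY_sq_zpow n i
      have hB := fun i => pB_zpow n i
      fin_cases p
      · refine ⟨QuotientGroup.mk ((X * Y ^ 2 * X⁻¹) ^ (-k)), ?_⟩
        rw [hf, map_zpow, map_mul, map_mul, map_pow, map_inv, hρX, hρY, hB]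
        simp
      · refine ⟨QuotientGroup.mk ((Y ^ 2) ^ k * X), ?_⟩
        rw [hf, map_mul, map_zpow, map_pow, hρX, hρY, Equiv.Perm.mul_apply, pX0, hA]
        simp
      · refine ⟨QuotientGroup.mk ((Y ^ 2) ^ (-k) * X⁻¹), ?_⟩
        rw [hf, map_mul, map_zpow, map_pow, map_inv, hρX, hρY, Equiv.Perm.mul_apply, pXi0, hA]
        simp
  rw [Nat.card_congr (Equiv.ofBijective f hbij), Nat.card_prod, Nat.card_zmod, Nat.card_eq_fintype_card,
    Fintype.card_fin]

lemma edge_eq {n : ℕ} (h4 : Y ^ (2 * n) = 1)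
    (ρ : H →* Equiv.Perm (Fin 3 × ZMod n)) (hρX : ρ X = pX n) (hρY : ρ Y = pY n)
    (g h : H) (e1 : (QuotientGroup.mk g : Vertex Y) = QuotientGroup.mk h)
    (e2 : (QuotientGroup.mk (g * X * Y) : Vertex Y) = QuotientGroup.mk (h * X * Y)) : g = h := by
  rw [QuotientGroup.eq] at e1 e2
  have := core_free (X := X) h4 ρ hρX hρY _ e1 (by
    convert e2 using 1
    group)
  exact inv_mul_eq_one.mp this

lemma simple_map {n : ℕ} (h2 : (X * Y) ^ 2 = 1) (h4 : Y ^ (2 * n) = 1)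
    (ρ : H →* Equiv.Perm (Fin 3 × ZMod n)) (hρX : ρ X = pX n) (hρY : ρ Y = pY n) :
    IsSimple X Y := by
  have hxy : ∀ g : H, g * X * Y * X * Y = g := fun g => by
    rw [pow_two] at h2
    calc g * X * Y * X * Y = g * (X * Y * (X * Y)) := by simp only [mul_assoc]
      _ = g := by rw [h2, mul_one]
  refine ⟨fun g hg => ?_, fun g h hgh => ?_⟩
  · rw [QuotientGroup.eq] at hg
    apply not_mem ρ hρX hρY
    convert hg using 1
    group
  · rw [Set.pair_eq_pair_iff] at hgh
    rcases hgh with ⟨e1, e2⟩ | ⟨e1, e2⟩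
    · rw [edge_eq h4 ρ hρX hρY g h e1 e2]
    · have : g = h * X * Y := edge_eq h4 ρ hρX hρY g (h * X * Y) e1 (by rw [hxy]; exact e2)
      rw [this, eq_comm, QuotientGroup.eq]
      convert Subgroup.mem_zpowers (X * Y) using 1
      group

lemma card_nbr {n : ℕ} (h2 : (X * Y) ^ 2 = 1) (h4 : Y ^ (2 * n) = 1)
    (ρ : H →* Equiv.Perm (Fin 3 × ZMod n)) (hρX : ρ X = pX n) (hρY : ρ Y = pY n)
    (v : Vertex Y) : Nat.card {w : Vertex Y // Adj X Y v w} = 2 * n := by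
  have hxy : ∀ g : H, g * X * Y * X * Y = g := fun g => by
    rw [pow_two] at h2
    calc g * X * Y * X * Y = g * (X * Y * (X * Y)) := by simp only [mul_assoc]
      _ = g := by rw [h2, mul_one]
  induction v using QuotientGroup.induction_on with | _ g =>
  have hs := simple_map h2 h4 ρ hρX hρY
  have hmk : ∀ a : Subgroup.zpowers Y,
      (QuotientGroup.mk (g * a) : Vertex Y) = QuotientGroup.mk g := fun a => by
    rw [eq_comm, QuotientGroup.eq, inv_mul_cancel_left]
    exact a.2
  let f : Subgroup.zpowers Y → {w : Vertex Y // Adj X Y (QuotientGroup.mk g) w} := fun a =>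
    ⟨QuotientGroup.mk (g * a * X * Y), by
      have := hs.1 (g * a)
      rw [hmk] at this
      exact ⟨this, g * a, by rw [hmk]⟩⟩
  have hbij : Function.Bijective f := by
    constructor
    · intro a b hab
      have hab : (QuotientGroup.mk (g * a * X * Y) : Vertex Y) = QuotientGroup.mk (g * b * X * Y) :=
        congrArg Subtype.val hab
      have := edge_eq h4 ρ hρX hρY (g * a) (g * b) (by rw [hmk, hmk]) hab
      exact Subtype.ext (mul_left_cancel this)
    · rintro ⟨w, hne, k, hk⟩
      have key : ∃ k : H, (QuotientGroup.mk g : Vertex Y) = QuotientGroup.mk k ∧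
          w = QuotientGroup.mk (k * X * Y) := by
        rw [Set.pair_eq_pair_iff] at hk
        rcases hk with ⟨e1, e2⟩ | ⟨e1, e2⟩
        · exact ⟨k, e1, e2⟩
        · exact ⟨k * X * Y, e1, by rw [hxy]; exact e2⟩
      obtain ⟨k, e1, rfl⟩ := key
      rw [QuotientGroup.eq] at e1
      refine ⟨⟨_, e1⟩, Subtype.ext ?_⟩
      show (QuotientGroup.mk (g * (g⁻¹ * k) * X * Y) : Vertex Y) = _
      rw [mul_inv_cancel_left]
  rw [← Nat.card_congr (Equiv.ofBijective f hbij), Nat.card_zpowers, order_Y h4 ρ hρY]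

end

/-- `(G_n, X, Y)` encodes a simple reflexive regular map with `3n` vertices of degree
`2n` and density 2/3. -/
theorem fermat_map_is_reflexive_regular (n : ℕ) (hn : 1 ≤ n)
    (X Y : PresentedGroup (fermatRels n))
    (hX : X = PresentedGroup.of 0) (hY : Y = PresentedGroup.of 1) :
    Subgroup.closure {X, Y} = ⊤ ∧
    (X * Y) ^ 2 = 1 ∧
    IsReflexive X Y ∧
    IsSimple X Y ∧
    Nat.card (Vertex Y) = 3 * n ∧
    (∀ v : Vertex Y, Nat.card {w : Vertex Y // Adj X Y v w} = 2 * n) ∧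
    3 * orderOf Y ^ 2 = 2 * Nat.card (PresentedGroup (fermatRels n)) := by
  have hr : ∀ r ∈ fermatRels n, (PresentedGroup.mk (fermatRels n)) r = 1 := fun r hr =>
    PresentedGroup.one_of_mem hr
  have m0 : PresentedGroup.mk (fermatRels n) (FreeGroup.of 0) = X := hX.symm
  have m1 : PresentedGroup.mk (fermatRels n) (FreeGroup.of 1) = Y := hY.symm
  have h1 : X ^ 3 = 1 := by
    have := hr (FreeGroup.of 0 ^ 3) (by simp [fermatRels])
    simpa only [map_mul, map_pow, map_inv, m0, m1] using this
  have h4 : Y ^ (2 * n) = 1 := by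
    have := hr (FreeGroup.of 1 ^ (2 * n)) (by simp [fermatRels])
    simpa only [map_mul, map_pow, map_inv, m0, m1] using this
  have h2 : (X * Y) ^ 2 = 1 := by
    have := hr ((FreeGroup.of 0 * FreeGroup.of 1) ^ 2) (by simp [fermatRels])
    simpa only [map_mul, map_pow, map_inv, m0, m1] using this
  have h3 : (X * Y * X⁻¹ * Y⁻¹) ^ 3 = 1 := by
    have := hr ((FreeGroup.of 0 * FreeGroup.of 1 * (FreeGroup.of 0)⁻¹ * (FreeGroup.of 1)⁻¹) ^ 3)
      (by simp [fermatRels])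
    simpa only [map_mul, map_pow, map_inv, m0, m1] using this
  have htop : Subgroup.closure {X, Y} = ⊤ := by
    rw [← PresentedGroup.closure_range_of (fermatRels n)]
    congr 1
    ext g
    simp only [Set.mem_insert_iff, Set.mem_singleton_iff, Set.mem_range, Fin.exists_fin_two,
      ← hX, ← hY]
    tauto
  have lift : ∀ {K : Type} [Group K] (a b : K), a ^ 3 = 1 → b ^ (2 * n) = 1 → (a * b) ^ 2 = 1 →
      (a * b * a⁻¹ * b⁻¹) ^ 3 = 1 →
      ∃ φ : PresentedGroup (fermatRels n) →* K, φ X = a ∧ φ Y = b := by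
    intro K _ a b k1 k2 k3 k4
    have hrel : ∀ r ∈ fermatRels n, FreeGroup.lift ![a, b] r = 1 := by
      intro r hr
      rcases hr with rfl | rfl | rfl | rfl
      · simpa using k1
      · simpa using k2
      · simpa using k3
      · simpa using k4
    refine ⟨PresentedGroup.toGroup hrel, ?_, ?_⟩
    · rw [hX, PresentedGroup.toGroup.of]; rfl
    · rw [hY, PresentedGroup.toGroup.of]; rfl
  obtain ⟨ρ, hρX, hρY⟩ := lift (pX n) (pY n) (pX_cube n) (pY_pow n) (pXY_sq n) (pComm n)
  have hV := card_vertex hn h1 h2 h3 h4 htop ρ hρX hρY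
  have hO := order_Y h4 ρ hρY
  refine ⟨htop, h2, ?_, simple_map h2 h4 ρ hρX hρY, hV, card_nbr h2 h4 ρ hρX hρY, ?_⟩
  · obtain ⟨φ, p0, p1⟩ := lift X⁻¹ Y⁻¹ (by rw [inv_pow, h1, inv_one])
      (by rw [inv_pow, h4, inv_one])
      (by
        have e : X⁻¹ * Y⁻¹ = Y * X := by rw [← yxy h2]; group
        have e2 : Y * X = X⁻¹ * (X * Y) * X⁻¹⁻¹ := by group
        rw [e, e2, conj_pow, h2]; group)
      (by
        have e : X⁻¹ * Y⁻¹ * X⁻¹⁻¹ * Y⁻¹⁻¹ =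
            (X * Y)⁻¹ * (X * Y * X⁻¹ * Y⁻¹) * (X * Y)⁻¹⁻¹ := by group
        rw [e, conj_pow, h3]; group)
    have hφ : φ.comp φ = MonoidHom.id _ := by
      apply MonoidHom.eq_of_eqOn_dense htop
      intro g hg
      rcases hg with rfl | hg
      · simp [p0]
      · rw [Set.mem_singleton_iff] at hg; subst hg; simp [p1]
    exact ⟨MonoidHom.toMulEquiv φ φ hφ hφ, p0, p1⟩
  · rw [← (Subgroup.zpowers Y).card_mul_index, Nat.card_zpowers, hO]
    have : (Subgroup.zpowers Y).index = 3 * n := hV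
    rw [this]; ring


end RegularMap
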